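/- Let Q, X₁, and X₂ be jointly distributed random variables on finite types with joint pmf p. Suppose X₁ and X₂ are independent (p_{X₁,X₂}(x₁,x₂) = p_{X₁}(x₁) * p_{X₂}(x₂) for all x₁, x₂). If H(Q|X₁) = 0 and H(Q|X₂) = 0, then Q is almost surely constant: there exists q₀ with p_Q(q₀) = 1 (equivalently H(Q) = 0). (Hence the common-random-variable measure I_∧ assigns zero redundancy whenever the predictors are independent, as in the And example.) -/

import Mathlib

open Real Finset

/- STATEMENT 10: If `X₁` and `X₂` are independent and `H(Q|X₁) = 0` and `H(Q|X₂) = 0`,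
then `Q` is almost surely constant: there is `q₀` with `p_Q(q₀) = 1`.
The joint pmf is `p : Q × X₁ × X₂ → ℝ`. -/

section Defs

variable {Q X₁ X₂ : Type*} [Fintype Q] [Fintype X₁] [Fintype X₂]

/-- Marginal of `Q`. -/
noncomputable def margQ (p : Q × X₁ × X₂ → ℝ) (q : Q) : ℝ :=
  ∑ x₁, ∑ x₂, p (q, x₁, x₂)

/-- Marginal of `X₁`. -/
noncomputable def margX1 (p : Q × X₁ × X₂ → ℝ) (x₁ : X₁) : ℝ :=
  ∑ q, ∑ x₂, p (q, x₁, x₂)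

/-- Marginal of `X₂`. -/
noncomputable def margX2 (p : Q × X₁ × X₂ → ℝ) (x₂ : X₂) : ℝ :=
  ∑ q, ∑ x₁, p (q, x₁, x₂)

/-- Marginal of `(X₁, X₂)`. -/
noncomputable def margX1X2 (p : Q × X₁ × X₂ → ℝ) (x₁ : X₁) (x₂ : X₂) : ℝ :=
  ∑ q, p (q, x₁, x₂)

/-- Marginal of `(Q, X₁)`. -/
noncomputable def margQX1 (p : Q × X₁ × X₂ → ℝ) (q : Q) (x₁ : X₁) : ℝ :=
  ∑ x₂, p (q, x₁, x₂)

/-- Marginal of `(Q, X₂)`. -/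
noncomputable def margQX2 (p : Q × X₁ × X₂ → ℝ) (q : Q) (x₂ : X₂) : ℝ :=
  ∑ x₁, p (q, x₁, x₂)

/-- Conditional entropy `H(Q|X₁)`. -/
noncomputable def condEntQX1 (p : Q × X₁ × X₂ → ℝ) : ℝ :=
  -∑ q, ∑ x₁, margQX1 p q x₁ * logb 2 (margQX1 p q x₁ / margX1 p x₁)

/-- Conditional entropy `H(Q|X₂)`. -/
noncomputable def condEntQX2 (p : Q × X₁ × X₂ → ℝ) : ℝ :=
  -∑ q, ∑ x₂, margQX2 p q x₂ * logb 2 (margQX2 p q x₂ / margX2 p x₂)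

end Defs

/-!
For a weight `a` and a total `m` with `0 ≤ a ≤ m`, the entropy term `a * logb b (a / m)` is
nonpositive and vanishes only for `a = 0` or `a = m`. Hence `H(Q|X) = 0` forces each column
`q ↦ p_{Q,X}(q, x)` to be concentrated at one point, so `X` determines `Q` on the support.
If `(q, x₁, x₂)` and `(r, y₁, y₂)` both lie in the support, independence makes the crossed pair
`(x₁, y₂)` possible, say together with the value `t` of `Q`. Then `X₁ = x₁` gives `q = t`, and
`X₂ = y₂` gives `t = r`.
-/

section CondEntropy

variable {Q X : Type*} {b : ℝ}

lemma mul_logb_div_nonpos {a m : ℝ} (hb : 1 < b) (ha : 0 ≤ a) (ham : a ≤ m) :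
    a * logb b (a / m) ≤ 0 :=
  mul_nonpos_of_nonneg_of_nonpos ha <|
    logb_nonpos hb (div_nonneg ha (ha.trans ham)) (div_le_one_of_le₀ ham (ha.trans ham))

lemma mul_logb_div_eq_zero_iff {a m : ℝ} (hb : 1 < b) (ha : 0 ≤ a) (ham : a ≤ m) :
    a * logb b (a / m) = 0 ↔ a = 0 ∨ a = m := by
  rcases ha.eq_or_lt with rfl | ha_pos
  · simp
  have hm_pos : 0 < m := ha_pos.trans_le ham
  rw [mul_eq_zero]
  refine or_congr_right ⟨fun hlog => ?_, fun h => by rw [h, div_self hm_pos.ne', logb_one]⟩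
  rw [← div_eq_one_iff_eq hm_pos.ne']
  exact eq_one_of_pos_of_logb_eq_zero hb (div_pos ha_pos hm_pos) hlog

variable [Fintype Q] [Fintype X]

/-- The conditional entropy `H(Q|X)`, in base `b`, of the joint weights `w` of `(Q, X)`. The
marginal of `X` is computed from `w`, so that one definition serves for both predictors. -/
noncomputable def condEntropy (b : ℝ) (w : Q → X → ℝ) : ℝ :=
  -∑ q, ∑ x, w q x * logb b (w q x / ∑ r, w r x)

variable {w : Q → X → ℝ}

lemma condEntropy_eq_zero_iff (hb : 1 < b) (hw : ∀ q x, 0 ≤ w q x) :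
    condEntropy b w = 0 ↔ ∀ q x, w q x = 0 ∨ w q x = ∑ r, w r x := by
  have hle (q x) : w q x ≤ ∑ r, w r x :=
    single_le_sum (f := fun r => w r x) (fun r _ => hw r x) (mem_univ q)
  have hterm (q x) : w q x * logb b (w q x / ∑ r, w r x) ≤ 0 :=
    mul_logb_div_nonpos hb (hw q x) (hle q x)
  rw [condEntropy, neg_eq_zero,
    sum_eq_zero_iff_of_nonpos fun q _ => sum_nonpos fun x _ => hterm q x]
  simp only [sum_eq_zero_iff_of_nonpos fun x _ => hterm _ x, mem_univ, true_imp_iff,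
    mul_logb_div_eq_zero_iff hb (hw _ _) (hle _ _)]

lemma eq_of_pos_of_condEntropy_eq_zero (hb : 1 < b) (hw : ∀ q x, 0 ≤ w q x)
    (h : condEntropy b w = 0) {q r : Q} {x : X} (hq : 0 < w q x) (hr : 0 < w r x) : q = r := by
  have hq_total : w q x = ∑ t, w t x :=
    ((condEntropy_eq_zero_iff hb hw).1 h q x).resolve_left hq.ne'
  by_contra hne
  have hlt : w q x < ∑ t, w t x :=
    single_lt_sum (f := fun t => w t x) (Ne.symm hne) (mem_univ q) (mem_univ r) hr
      fun t _ _ => hw t x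
  exact hlt.ne hq_total

end CondEntropy

section Marginals

variable {Q X₁ X₂ : Type*} {p : Q × X₁ × X₂ → ℝ}

lemma margQX1_nonneg [Fintype X₂] (hnn : ∀ a, 0 ≤ p a) (q : Q) (x₁ : X₁) :
    0 ≤ margQX1 p q x₁ :=
  sum_nonneg fun _ _ => hnn _

lemma margQX2_nonneg [Fintype X₁] (hnn : ∀ a, 0 ≤ p a) (q : Q) (x₂ : X₂) :
    0 ≤ margQX2 p q x₂ :=
  sum_nonneg fun _ _ => hnn _

variable {q : Q} {x₁ : X₁} {x₂ : X₂}

lemma margQX1_pos [Fintype X₂] (hnn : ∀ a, 0 ≤ p a) (h : 0 < p (q, x₁, x₂)) :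
    0 < margQX1 p q x₁ :=
  sum_pos' (fun _ _ => hnn _) ⟨x₂, mem_univ _, h⟩

lemma margQX2_pos [Fintype X₁] (hnn : ∀ a, 0 ≤ p a) (h : 0 < p (q, x₁, x₂)) :
    0 < margQX2 p q x₂ :=
  sum_pos' (fun _ _ => hnn _) ⟨x₁, mem_univ _, h⟩

lemma margX1_pos [Fintype Q] [Fintype X₂] (hnn : ∀ a, 0 ≤ p a) (h : 0 < p (q, x₁, x₂)) :
    0 < margX1 p x₁ :=
  sum_pos' (fun q _ => margQX1_nonneg hnn q x₁) ⟨q, mem_univ _, margQX1_pos hnn h⟩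

lemma margX2_pos [Fintype Q] [Fintype X₁] (hnn : ∀ a, 0 ≤ p a) (h : 0 < p (q, x₁, x₂)) :
    0 < margX2 p x₂ :=
  sum_pos' (fun q _ => margQX2_nonneg hnn q x₂) ⟨q, mem_univ _, margQX2_pos hnn h⟩

lemma exists_pos_of_margX1X2_pos [Fintype Q] (hnn : ∀ a, 0 ≤ p a)
    (h : 0 < margX1X2 p x₁ x₂) : ∃ q, 0 < p (q, x₁, x₂) := by
  simpa only [mem_univ, true_and] using (sum_pos_iff_of_nonneg fun _ _ => hnn _).1 h

lemma margQ_eq_sum [Fintype Q] [Fintype X₁] [Fintype X₂] {q₀ : Q}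
    (h : ∀ q x₁ x₂, q ≠ q₀ → p (q, x₁, x₂) = 0) : margQ p q₀ = ∑ a, p a := by
  simp only [Fintype.sum_prod_type]
  exact (Fintype.sum_eq_single q₀ fun q hq =>
    sum_eq_zero fun x₁ _ => sum_eq_zero fun x₂ _ => h q x₁ x₂ hq).symm

end Marginals

theorem eq_of_pos_of_condEnt_eq_zero {Q X₁ X₂ : Type*} [Fintype Q] [Fintype X₁] [Fintype X₂]
    {p : Q × X₁ × X₂ → ℝ} (hnn : ∀ a, 0 ≤ p a)
    (hsupp : ∀ x₁ x₂, 0 < margX1 p x₁ → 0 < margX2 p x₂ → 0 < margX1X2 p x₁ x₂)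
    (h1 : condEntQX1 p = 0) (h2 : condEntQX2 p = 0) {q r : Q} {x₁ y₁ : X₁} {x₂ y₂ : X₂}
    (hq : 0 < p (q, x₁, x₂)) (hr : 0 < p (r, y₁, y₂)) : q = r := by
  have hent₁ : condEntropy 2 (margQX1 p) = 0 := h1
  have hent₂ : condEntropy 2 (margQX2 p) = 0 := h2
  obtain ⟨t, ht⟩ : ∃ t, 0 < p (t, x₁, y₂) :=
    exists_pos_of_margX1X2_pos hnn (hsupp x₁ y₂ (margX1_pos hnn hq) (margX2_pos hnn hr))
  calc
    q = t := eq_of_pos_of_condEntropy_eq_zero one_lt_two (margQX1_nonneg hnn) hent₁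
      (margQX1_pos hnn hq) (margQX1_pos hnn ht)
    _ = r := eq_of_pos_of_condEntropy_eq_zero one_lt_two (margQX2_nonneg hnn) hent₂
      (margQX2_pos hnn ht) (margQX2_pos hnn hr)

theorem stmt_10_general {Q X₁ X₂ : Type*} [Fintype Q] [Fintype X₁] [Fintype X₂]
    (p : Q × X₁ × X₂ → ℝ)
    (hnn : ∀ a, 0 ≤ p a)
    (hsum : ∑ a, p a = 1)
    (hsupp : ∀ x₁ x₂, 0 < margX1 p x₁ → 0 < margX2 p x₂ → 0 < margX1X2 p x₁ x₂)
    (h1 : condEntQX1 p = 0)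
    (h2 : condEntQX2 p = 0) :
    ∃ q₀ : Q, margQ p q₀ = 1 := by
  obtain ⟨⟨q₀, x₁, x₂⟩, -, h₀⟩ : ∃ a ∈ univ, 0 < p a :=
    (sum_pos_iff_of_nonneg fun _ _ => hnn _).1 (hsum ▸ one_pos)
  refine ⟨q₀, (margQ_eq_sum fun q y₁ y₂ hne => ?_).trans hsum⟩
  by_contra hp
  exact hne (eq_of_pos_of_condEnt_eq_zero hnn hsupp h1 h2 ((hnn _).lt_of_ne' hp) h₀)

theorem stmt_10 {Q X₁ X₂ : Type*} [Fintype Q] [Fintype X₁] [Fintype X₂]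
    (p : Q × X₁ × X₂ → ℝ)
    (hnn : ∀ a, 0 ≤ p a)
    (hsum : ∑ a, p a = 1)
    (hind : ∀ x₁ x₂, margX1X2 p x₁ x₂ = margX1 p x₁ * margX2 p x₂)
    (h1 : condEntQX1 p = 0)
    (h2 : condEntQX2 p = 0) :
    ∃ q₀ : Q, margQ p q₀ = 1 :=
  stmt_10_general p hnn hsum (fun x₁ x₂ hx₁ hx₂ => hind x₁ x₂ ▸ mul_pos hx₁ hx₂) h1 h2
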